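/- Let P be a polygonal curve in ℝ^d and let P' be a polygon inscribed in P, i.e. P' is an inscribed polygon of P viewed as a continuous curve (its vertices lie on P in order along P). Then TC(P') ≤ TC(P). -/

import Mathlib

open Set Filter MeasureTheory
open scoped ENNReal NNReal RealInnerProductSpace

noncomputable section

/-- The parameters `u 0 < u 1 < ⋯ < u m` of a polygon inscribed in (the restriction to
`[a,b]` of) a curve: strictly increasing parameters lying in `[a,b]`. -/
def InscribedIn (a b : ℝ) (m : ℕ) (u : ℕ → ℝ) : Prop :=
  (∀ i < m, u i < u (i + 1)) ∧ ∀ i ≤ m, u i ∈ Set.Icc a b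

/-- The length of the polygon inscribed in the curve `γ` with parameters `u 0, …, u m`:
the sum of the euclidean lengths of its edges. -/
def polyLen {E : Type*} [NormedAddCommGroup E] (γ : ℝ → E) (m : ℕ) (u : ℕ → ℝ) : ℝ :=
  ∑ i ∈ Finset.range m, ‖γ (u (i + 1)) - γ (u i)‖

/-- The (Jordan) length of the arc `γ : [a,b] → E`: the supremum of the lengths of all
inscribed polygons, valued in `[0,∞]`. -/
def arcLen {E : Type*} [NormedAddCommGroup E] (γ : ℝ → E) (a b : ℝ) : ℝ≥0∞ :=
  ⨆ (m : ℕ) (u : ℕ → ℝ) (_ : InscribedIn a b m u), ENNReal.ofReal (polyLen γ m u)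

/-- The list of vertices of the polygon inscribed in `γ` with parameters `u 0, …, u m`. -/
def vertexList {E : Type*} (γ : ℝ → E) (m : ℕ) (u : ℕ → ℝ) : List E :=
  (List.range (m + 1)).map fun i => γ (u i)

/-- Collapse consecutive equal entries of a list to single entries. -/
def collapse {E : Type*} (l : List E) : List E :=
  @List.destutter E (· ≠ ·) (Classical.decRel _) l

/-- The sum of the turning angles of a polygon given by its list of vertices: at each
interior vertex, the angle in `[0,π]` between the incoming and outgoing edge vectors. -/
def turnSum {E : Type*} [NormedAddCommGroup E] [InnerProductSpace ℝ E] : List E → ℝ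
  | a :: b :: c :: l => InnerProductGeometry.angle (b - a) (c - b) + turnSum (b :: c :: l)
  | _ => 0

/-- The sum, at each interior vertex, of the euclidean distance `‖u₊ - u₋‖` between the
unit tangent vectors of the incoming and outgoing edges (so a corner of turning angle θ
contributes `2 sin(θ/2)`). -/
def starSum {E : Type*} [NormedAddCommGroup E] [InnerProductSpace ℝ E] : List E → ℝ
  | a :: b :: c :: l =>
      ‖(‖c - b‖⁻¹ • (c - b)) - (‖b - a‖⁻¹ • (b - a))‖ + starSum (b :: c :: l)
  | _ => 0

/-- The total curvature of the polygon inscribed in `γ` with parameters `u 0, …, u m`: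
after collapsing consecutive equal vertices, the sum of its turning angles. -/
def polyTC {E : Type*} [NormedAddCommGroup E] [InnerProductSpace ℝ E]
    (γ : ℝ → E) (m : ℕ) (u : ℕ → ℝ) : ℝ :=
  turnSum (collapse (vertexList γ m u))

/-- The total curvature of the arc `γ : [a,b] → E`: the supremum over all inscribed
polygons of their total curvature, valued in `[0,∞]`. -/
def arcTC {E : Type*} [NormedAddCommGroup E] [InnerProductSpace ℝ E]
    (γ : ℝ → E) (a b : ℝ) : ℝ≥0∞ :=
  ⨆ (m : ℕ) (u : ℕ → ℝ) (_ : InscribedIn a b m u), ENNReal.ofReal (polyTC γ m u)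

/-- The euclidean total curvature `TC*` of the polygon inscribed in `γ` with parameters
`u 0, …, u m`. -/
def polyTCStar {E : Type*} [NormedAddCommGroup E] [InnerProductSpace ℝ E]
    (γ : ℝ → E) (m : ℕ) (u : ℕ → ℝ) : ℝ :=
  starSum (collapse (vertexList γ m u))

/-- The euclidean total curvature `TC*` of the arc `γ : [a,b] → E`. -/
def arcTCStar {E : Type*} [NormedAddCommGroup E] [InnerProductSpace ℝ E]
    (γ : ℝ → E) (a b : ℝ) : ℝ≥0∞ :=
  ⨆ (m : ℕ) (u : ℕ → ℝ) (_ : InscribedIn a b m u), ENNReal.ofReal (polyTCStar γ m u)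

/-- Cyclically ordered parameters `u 0 < ⋯ < u m` in `[0,1)` of a polygon inscribed in a
loop `γ : ℝ/ℤ → E`. -/
def LoopInscribed (m : ℕ) (u : ℕ → ℝ) : Prop :=
  (∀ i < m, u i < u (i + 1)) ∧ ∀ i ≤ m, u i ∈ Set.Ico (0 : ℝ) 1

/-- The list of vertices of the polygon inscribed in the loop `γ` with parameters
`u 0, …, u m`. -/
def loopVertexList {E : Type*} (γ : AddCircle (1 : ℝ) → E) (m : ℕ) (u : ℕ → ℝ) : List E :=
  (List.range (m + 1)).map fun i => γ (u i : ℝ)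

/-- The sum of the lengths of the successive edges of a list of points. -/
def lenList {E : Type*} [NormedAddCommGroup E] : List E → ℝ
  | a :: b :: l => ‖b - a‖ + lenList (b :: l)
  | _ => 0

/-- The length of the closed polygon inscribed in the loop `γ` with parameters
`u 0, …, u m`: the sum of the edge lengths, indices taken cyclically. -/
def loopPolyLen {E : Type*} [NormedAddCommGroup E]
    (γ : AddCircle (1 : ℝ) → E) (m : ℕ) (u : ℕ → ℝ) : ℝ :=
  lenList (loopVertexList γ m u ++ (loopVertexList γ m u).take 1)

/-- The length of a loop `γ : ℝ/ℤ → E`: the supremum of the lengths of inscribed closed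
polygons, valued in `[0,∞]`. -/
def loopLen {E : Type*} [NormedAddCommGroup E] (γ : AddCircle (1 : ℝ) → E) : ℝ≥0∞ :=
  ⨆ (m : ℕ) (u : ℕ → ℝ) (_ : LoopInscribed m u), ENNReal.ofReal (loopPolyLen γ m u)

open Classical in
/-- Collapse consecutive equal vertices of a *cyclic* list of vertices: collapse
consecutive duplicates, also across the wrap-around. -/
def cyclicCollapse {E : Type*} (l : List E) : List E :=
  if 2 ≤ (collapse l).length ∧ (collapse l).getLast? = (collapse l).head? then
    (collapse l).dropLast
  else collapse l

/-- The total curvature of the closed polygon inscribed in the loop `γ` with parameters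
`u 0, …, u m`: after cyclically collapsing consecutive equal vertices, the sum of the
turning angles at all of its vertices (every vertex of a closed polygon is interior). -/
def loopPolyTC {E : Type*} [NormedAddCommGroup E] [InnerProductSpace ℝ E]
    (γ : AddCircle (1 : ℝ) → E) (m : ℕ) (u : ℕ → ℝ) : ℝ :=
  turnSum (cyclicCollapse (loopVertexList γ m u) ++
    (cyclicCollapse (loopVertexList γ m u)).take 2)

/-- The total curvature of a loop `γ : ℝ/ℤ → E`: the supremum over all inscribed closed
polygons of their total curvature, valued in `[0,∞]`. -/
def loopTC {E : Type*} [NormedAddCommGroup E] [InnerProductSpace ℝ E]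
    (γ : AddCircle (1 : ℝ) → E) : ℝ≥0∞ :=
  ⨆ (m : ℕ) (u : ℕ → ℝ) (_ : LoopInscribed m u), ENNReal.ofReal (loopPolyTC γ m u)

/-- The euclidean total curvature `TC*` of the closed inscribed polygon. -/
def loopPolyTCStar {E : Type*} [NormedAddCommGroup E] [InnerProductSpace ℝ E]
    (γ : AddCircle (1 : ℝ) → E) (m : ℕ) (u : ℕ → ℝ) : ℝ :=
  starSum (cyclicCollapse (loopVertexList γ m u) ++
    (cyclicCollapse (loopVertexList γ m u)).take 2)

/-- The euclidean total curvature `TC*` of a loop `γ : ℝ/ℤ → E`. -/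
def loopTCStar {E : Type*} [NormedAddCommGroup E] [InnerProductSpace ℝ E]
    (γ : AddCircle (1 : ℝ) → E) : ℝ≥0∞ :=
  ⨆ (m : ℕ) (u : ℕ → ℝ) (_ : LoopInscribed m u), ENNReal.ofReal (loopPolyTCStar γ m u)

end

/-- The piecewise-linear curve through the vertices `v 0, v 1, …`: for `t ∈ [i, i+1]` it
interpolates linearly from `v i` to `v (i+1)`. -/
noncomputable def plCurve {E : Type*} [NormedAddCommGroup E] [Module ℝ E]
    (v : ℕ → E) : ℝ → E := fun t =>
  (1 - (t - (⌊t⌋₊ : ℝ))) • v ⌊t⌋₊ + (t - (⌊t⌋₊ : ℝ)) • v (⌊t⌋₊ + 1)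

/-!
A polygon inscribed in `P` is obtained from `P` by two kinds of moves: inserting points on edges,
which does not change the total curvature, and deleting vertices, which does not increase it by the
spherical triangle inequality for the directions of the edges. Both moves are made at the head of
the list of remaining vertices, keeping track of the current position and direction. The direction
before the first edge is arbitrary: any choice bounds the total curvature from above, and the
direction of the first nonzero edge attains it.
-/

open InnerProductGeometry

section Collapse

variable {E : Type*}

theorem collapse_cons_cons_self (p : E) (l : List E) :
    collapse (p :: p :: l) = collapse (p :: l) := by
  simp [collapse, List.destutter_cons']

theorem collapse_cons_cons_of_ne {p q : E} (h : q ≠ p) (l : List E) :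
    collapse (p :: q :: l) = p :: collapse (q :: l) := by
  simp [collapse, List.destutter_cons', h.symm]

theorem exists_collapse_cons_eq_cons (p : E) (l : List E) :
    ∃ l', collapse (p :: l) = p :: l' := by
  induction l with
  | nil => exact ⟨[], rfl⟩
  | cons q l ih =>
    obtain rfl | hqp := eq_or_ne q p
    · rwa [collapse_cons_cons_self]
    · exact ⟨_, collapse_cons_cons_of_ne hqp l⟩

end Collapse

section TurnFrom

variable {E : Type*} [NormedAddCommGroup E] [InnerProductSpace ℝ E]

open Classical in
/-- The total turning angle of the polygon `p :: l` when its initial vertex `p` is reached in the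
direction `e`, repeated vertices being skipped. The vector `e` may be zero: Mathlib's convention
`angle 0 x = π / 2` still satisfies the triangle inequality for angles. -/
noncomputable def turnFrom : E → E → List E → ℝ
  | _, _, [] => 0
  | e, p, q :: l => if q = p then turnFrom e p l else angle e (q - p) + turnFrom (q - p) q l

theorem turnFrom_cons_self (e p : E) (l : List E) : turnFrom e p (p :: l) = turnFrom e p l := by
  simp [turnFrom]

theorem turnFrom_cons_of_ne (e : E) {p q : E} (h : q ≠ p) (l : List E) :
    turnFrom e p (q :: l) = angle e (q - p) + turnFrom (q - p) q l := by
  simp [turnFrom, h]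

theorem turnFrom_nonneg (e p : E) (l : List E) : 0 ≤ turnFrom e p l := by
  induction l generalizing e p with
  | nil => exact le_rfl
  | cons q l ih =>
    obtain rfl | hqp := eq_or_ne q p
    · exact (ih e q).trans_eq (turnFrom_cons_self e q l).symm
    · rw [turnFrom_cons_of_ne e hqp]
      exact add_nonneg (angle_nonneg _ _) (ih _ _)

theorem turnFrom_le_angle_add_turnFrom (e e' p : E) (l : List E) :
    turnFrom e p l ≤ angle e e' + turnFrom e' p l := by
  induction l with
  | nil => simpa [turnFrom] using angle_nonneg e e'
  | cons q l ih =>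
    obtain rfl | hqp := eq_or_ne q p
    · simpa only [turnFrom_cons_self] using ih
    · rw [turnFrom_cons_of_ne e hqp, turnFrom_cons_of_ne e' hqp, ← add_assoc]
      gcongr
      exact angle_le_angle_add_angle _ _ _

theorem turnFrom_cons_le_turnFrom_cons {q : E} {l' l : List E}
    (h : ∀ e, turnFrom e q l' ≤ turnFrom e q l) (e p : E) :
    turnFrom e p (q :: l') ≤ turnFrom e p (q :: l) := by
  obtain rfl | hqp := eq_or_ne q p
  · simpa only [turnFrom_cons_self] using h e
  · simpa only [turnFrom_cons_of_ne e hqp, add_le_add_iff_left] using h (q - p)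

theorem turnFrom_le_turnFrom_cons (e p q : E) (l : List E) :
    turnFrom e p l ≤ turnFrom e p (q :: l) := by
  obtain rfl | hqp := eq_or_ne q p
  · exact (turnFrom_cons_self e q l).ge
  rw [turnFrom_cons_of_ne e hqp]
  cases l with
  | nil => exact add_nonneg (angle_nonneg _ _) (turnFrom_nonneg _ _ _)
  | cons r l =>
    obtain rfl | hrq := eq_or_ne r q
    · rw [turnFrom_cons_of_ne e hqp, turnFrom_cons_self]
    rw [turnFrom_cons_of_ne (q - p) hrq]
    obtain rfl | hrp := eq_or_ne r p
    · rw [turnFrom_cons_self]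
      linarith [turnFrom_le_angle_add_turnFrom e (r - q) r l,
        angle_le_angle_add_angle e (q - r) (r - q)]
    · rw [turnFrom_cons_of_ne e hrp]
      have angle_split : angle (q - p) (r - q) = angle (q - p) (r - p) + angle (r - p) (r - q) := by
        rw [angle_eq_angle_add_add_angle_add (q - p) (sub_ne_zero.mpr hrq),
          sub_add_sub_cancel', angle_comm (r - q)]
      linarith [turnFrom_le_angle_add_turnFrom (r - p) (r - q) r l,
        angle_le_angle_add_angle e (q - p) (r - p)]

theorem angle_eq_zero_of_sameRay {x y : E} (h : SameRay ℝ x y) (hx : x ≠ 0) (hy : y ≠ 0) :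
    angle x y = 0 := by
  obtain ⟨r, hr, rfl⟩ := h.exists_pos_left hx hy
  rw [angle_smul_right_of_pos _ _ hr, angle_self hx]

theorem turnFrom_cons_cons_le_of_wbtw (e : E) {p q r : E} (h : Wbtw ℝ p q r) (l : List E) :
    turnFrom e p (q :: r :: l) ≤ turnFrom e p (r :: l) := by
  obtain rfl | hqp := eq_or_ne q p
  · rw [turnFrom_cons_self]
  obtain rfl | hrq := eq_or_ne r q
  · rw [turnFrom_cons_of_ne e hqp, turnFrom_cons_self, turnFrom_cons_of_ne e hqp]
  have hrp : r ≠ p := (h.left_ne_right_of_ne_left hqp).symm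
  have hqp0 := sub_ne_zero.mpr hqp
  have hrq0 := sub_ne_zero.mpr hrq
  have hrp0 := sub_ne_zero.mpr hrp
  rw [turnFrom_cons_of_ne e hqp, turnFrom_cons_of_ne _ hrq, turnFrom_cons_of_ne e hrp]
  have no_turn : angle (q - p) (r - q) = 0 := angle_eq_zero_of_sameRay h.sameRay_vsub hqp0 hrq0
  have same_start : angle (r - p) (q - p) = 0 :=
    angle_eq_zero_of_sameRay h.sameRay_vsub_left.symm hrp0 hqp0
  have same_end : angle (r - q) (r - p) = 0 :=
    angle_eq_zero_of_sameRay h.sameRay_vsub_right.symm hrq0 hrp0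
  linarith [angle_le_angle_add_angle e (r - p) (q - p),
    turnFrom_le_angle_add_turnFrom (r - q) (r - p) r l]

theorem turnSum_cons_collapse_cons (z p : E) (l : List E) :
    turnSum (z :: collapse (p :: l)) = turnFrom (p - z) p l := by
  induction l generalizing z p with
  | nil => rfl
  | cons q l ih =>
    obtain rfl | hqp := eq_or_ne q p
    · rw [collapse_cons_cons_self, turnFrom_cons_self, ih]
    · obtain ⟨l', hl'⟩ := exists_collapse_cons_eq_cons q l
      rw [collapse_cons_cons_of_ne hqp, turnFrom_cons_of_ne _ hqp, ← ih, hl', turnSum]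

theorem turnSum_collapse_cons_le_turnFrom (e p : E) (l : List E) :
    turnSum (collapse (p :: l)) ≤ turnFrom e p l := by
  induction l with
  | nil => exact le_rfl
  | cons q l ih =>
    obtain rfl | hqp := eq_or_ne q p
    · rwa [collapse_cons_cons_self, turnFrom_cons_self]
    · rw [collapse_cons_cons_of_ne hqp, turnSum_cons_collapse_cons, turnFrom_cons_of_ne e hqp]
      exact le_add_of_nonneg_left (angle_nonneg _ _)

theorem turnSum_collapse_le_turnFrom (e p : E) (l : List E) :
    turnSum (collapse l) ≤ turnFrom e p l := by
  cases l with
  | nil => exact le_rfl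
  | cons q l =>
    obtain rfl | hqp := eq_or_ne q p
    · rw [turnFrom_cons_self]
      exact turnSum_collapse_cons_le_turnFrom e q l
    · rw [turnFrom_cons_of_ne e hqp]
      exact (turnSum_collapse_cons_le_turnFrom (q - p) q l).trans
        (le_add_of_nonneg_left (angle_nonneg _ _))

theorem exists_turnFrom_eq_turnSum_collapse_cons (p : E) (l : List E) :
    ∃ e, turnFrom e p l = turnSum (collapse (p :: l)) := by
  induction l with
  | nil => exact ⟨0, rfl⟩
  | cons q l ih =>
    obtain rfl | hqp := eq_or_ne q p
    · simpa only [collapse_cons_cons_self, turnFrom_cons_self] using ih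
    · refine ⟨q - p, ?_⟩
      rw [turnFrom_cons_of_ne _ hqp, angle_self (sub_ne_zero.mpr hqp), zero_add,
        collapse_cons_cons_of_ne hqp, turnSum_cons_collapse_cons]

end TurnFrom

/-- `InscribedFrom p l' l` says that the points of `l'` lie, in order, on the polygon `p :: l`.
It encodes inscribed polygons without parameters: the point `p` moves along the polygon, `l'` lists
the points still to be met and `l` the vertices still ahead. -/
inductive InscribedFrom {E : Type*} [AddCommGroup E] [Module ℝ E] : E → List E → List E → Prop
  | nil (p : E) (l : List E) : InscribedFrom p [] l
  | here {p : E} {l' l : List E} : InscribedFrom p l' l → InscribedFrom p (p :: l') l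
  | edge {p q r : E} {l' l : List E} :
      Wbtw ℝ p q r → InscribedFrom q l' (r :: l) → InscribedFrom p (q :: l') (r :: l)
  | skip {p r : E} {l' l : List E} : InscribedFrom r l' l → InscribedFrom p l' (r :: l)

namespace InscribedFrom

variable {E : Type*} [NormedAddCommGroup E] [InnerProductSpace ℝ E]

theorem turnFrom_le {p : E} {l' l : List E} (h : InscribedFrom p l' l) (e : E) :
    turnFrom e p l' ≤ turnFrom e p l := by
  induction h generalizing e with
  | nil p l => exact turnFrom_nonneg e p l
  | here _ ih => exact (turnFrom_cons_self e _ _).trans_le (ih e)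
  | edge hq _ ih =>
    exact (turnFrom_cons_le_turnFrom_cons ih e _).trans (turnFrom_cons_cons_le_of_wbtw e hq _)
  | skip _ ih =>
    exact (turnFrom_le_turnFrom_cons e _ _ _).trans (turnFrom_cons_le_turnFrom_cons ih e _)

theorem turnSum_collapse_le {p : E} {l' l : List E} (h : InscribedFrom p l' l) :
    turnSum (collapse l') ≤ turnSum (collapse (p :: l)) := by
  obtain ⟨e, he⟩ := exists_turnFrom_eq_turnSum_collapse_cons p l
  calc
    turnSum (collapse l') ≤ turnFrom e p l' := turnSum_collapse_le_turnFrom e p l'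
    _ ≤ turnFrom e p l := h.turnFrom_le e
    _ = turnSum (collapse (p :: l)) := he

end InscribedFrom

section PlCurve

variable {E : Type*} [NormedAddCommGroup E] [Module ℝ E]

theorem plCurve_natCast (v : ℕ → E) (k : ℕ) : plCurve v k = v k := by
  simp [plCurve]

theorem plCurve_eq_lineMap (v : ℕ → E) {k : ℕ} {x : ℝ} (hx : x ∈ Icc (k : ℝ) (k + 1)) :
    plCurve v x = AffineMap.lineMap (v k) (v (k + 1)) (x - k) := by
  obtain rfl | hlt := hx.2.eq_or_lt
  · simpa using plCurve_natCast v (k + 1)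
  · have hfloor : ⌊x⌋₊ = k := (Nat.floor_eq_iff (k.cast_nonneg.trans hx.1)).mpr ⟨hx.1, hlt⟩
    rw [plCurve, hfloor, AffineMap.lineMap_apply_module]

theorem wbtw_plCurve (v : ℕ → E) {k : ℕ} {t x : ℝ} (hkt : k ≤ t) (htx : t ≤ x)
    (hxk : x ≤ k + 1) : Wbtw ℝ (plCurve v t) (plCurve v x) (v (k + 1)) := by
  have hbtw : Wbtw ℝ (t - k) (x - k) 1 := by
    rw [← mem_segment_iff_wbtw, segment_eq_Icc (by linarith)]
    constructor <;> linarith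
  rw [plCurve_eq_lineMap v ⟨hkt, htx.trans hxk⟩, plCurve_eq_lineMap v ⟨hkt.trans htx, hxk⟩]
  simpa only [AffineMap.lineMap_apply_one] using hbtw.map (AffineMap.lineMap (v k) (v (k + 1)))

theorem inscribedFrom_plCurve (v : ℕ → E) (j : ℕ) {k : ℕ} {t : ℝ} {L : List ℝ}
    (hkt : k ≤ t) (hsorted : (t :: L).Pairwise (· ≤ ·)) (hle : ∀ x ∈ L, x ≤ k + j) :
    InscribedFrom (plCurve v t) (L.map (plCurve v)) ((List.range' (k + 1) j).map v) := by
  induction j generalizing k t L with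
  | zero =>
    have all_eq : ∀ x ∈ L, x = t := fun x hx ↦
      (((hle x hx).trans_eq (by simp)).trans hkt).antisymm (List.rel_of_pairwise_cons hsorted hx)
    rw [List.eq_replicate_of_mem all_eq]
    induction L.length with
    | zero => exact .nil _ _
    | succ _ ih => exact .here ih
  | succ j ihj =>
    induction L generalizing t with
    | nil => exact .nil _ _
    | cons x L ihL =>
      have htx : t ≤ x := List.rel_of_pairwise_cons hsorted List.mem_cons_self
      obtain hxk | hkx := le_total x (k + 1)
      · exact .edge (wbtw_plCurve v hkt htx hxk)
          (ihL (hkt.trans htx) hsorted.of_cons fun y hy ↦ hle y (List.mem_cons_of_mem _ hy))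
      · have hsorted_succ : ((k + 1 : ℕ) :: x :: L : List ℝ).Pairwise (· ≤ ·) :=
          List.pairwise_cons_cons_iff_of_trans.mpr ⟨by exact_mod_cast hkx, hsorted.of_cons⟩
        refine .skip ?_
        rw [← plCurve_natCast v (k + 1)]
        refine ihj le_rfl hsorted_succ fun y hy ↦ (hle y hy).trans_eq ?_
        push_cast
        ring

end PlCurve

theorem InscribedIn.monotoneOn {a b : ℝ} {m : ℕ} {u : ℕ → ℝ} (h : InscribedIn a b m u) :
    MonotoneOn u (Iic m) :=
  monotoneOn_of_le_add_one ordConnected_Iic fun i _ _ hi ↦ (h.1 i hi).le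

theorem tc_inscribed_polygon_le_general {E : Type*} [NormedAddCommGroup E] [InnerProductSpace ℝ E]
    (n : ℕ) (v : ℕ → E) {m : ℕ} {u : ℕ → ℝ} (hmono : MonotoneOn u (Iic m))
    (hmem : ∀ i ≤ m, u i ∈ Icc (0 : ℝ) n) :
    polyTC (plCurve v) m u ≤ turnSum (collapse ((List.range (n + 1)).map v)) := by
  have sorted : (0 :: (List.range (m + 1)).map u).Pairwise (· ≤ ·) := by
    refine List.pairwise_cons.mpr ⟨?_, List.pairwise_map.mpr ?_⟩
    · simpa [Nat.lt_succ_iff] using fun i hi ↦ (hmem i hi).1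
    · exact List.pairwise_le_range.imp_of_mem fun hi hj hij ↦
        hmono (Nat.le_of_lt_succ (List.mem_range.mp hi))
          (Nat.le_of_lt_succ (List.mem_range.mp hj)) hij
  have le_end : ∀ x ∈ (List.range (m + 1)).map u, x ≤ (0 : ℕ) + n := by
    simpa [Nat.lt_succ_iff] using fun i hi ↦ (hmem i hi).2
  have points : vertexList (plCurve v) m u = ((List.range (m + 1)).map u).map (plCurve v) := by
    rw [List.map_map, vertexList, Function.comp_def]
  have start : plCurve v 0 = v 0 := mod_cast plCurve_natCast v 0
  have vertices : (List.range (n + 1)).map v = plCurve v 0 :: (List.range' (0 + 1) n).map v := by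
    rw [start, List.range_eq_range', List.range'_succ, List.map_cons]
  rw [polyTC, points, vertices]
  exact (inscribedFrom_plCurve v n Nat.cast_zero.le sorted le_end).turnSum_collapse_le

/-- if `P'` is a polygon inscribed in a polygonal curve `P` (its vertices
lie on `P`, in order along `P`), then `TC(P') ≤ TC(P)`. -/
theorem tc_inscribed_polygon_le (d n : ℕ) (v : ℕ → EuclideanSpace ℝ (Fin d))
    (m : ℕ) (u : ℕ → ℝ) (h : InscribedIn 0 n m u) :
    polyTC (plCurve v) m u ≤ turnSum (collapse ((List.range (n + 1)).map v)) :=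
  tc_inscribed_polygon_le_general n v h.monotoneOn h.2
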